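/- Let (M,d) be a metric space with a σ-finite Borel measure μ, let m ≥ 1, 1 ≤ p < ∞, and write X = L^p(μ; ℂ^m). Let N : X → [0,∞) be a norm on X equivalent to the L^p norm. Let D : Dom(D) ⊆ X → X be a densely defined linear operator and let V : ℝ → B(X) be a C₀ group generated by iD satisfying N(V(t)u) ≤ c·e^{ω|t|}·N(u) for all t ∈ ℝ and u ∈ X, for some constants c ≥ 1 and ω ≥ 0. Suppose there is a constant κ > 0 such that for every bounded Lipschitz function η : M → ℝ and every u ∈ Dom(D): (i) η·u ∈ Dom(D); (ii) N(η·(Du) − D(η·u)) ≤ κ·Lip(η)·N(u); and (iii) η²·(Du) − 2η·D(η·u) + D(η²·u) = 0 in X. Then for every closed set K ⊆ M, every u ∈ X with u = 0 μ-a.e. on M∖K, and every t ∈ ℝ, one has V(t)u = 0 μ-a.e. on {x ∈ M : dist(x,K) > cκ|t|}. -/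

import Mathlib

open MeasureTheory Complex

/-!
Let `E` be the multiplication by a bounded Lipschitz function `η` that vanishes on `K`. Since
`[E, D]` is bounded by `k = κ Lip(η)` and commutes with `E`, the iterated commutators
`Tₙ(t) = [E, [E, …, [E, V t]]]` satisfy `Tₙ' = i (D Tₙ + n [E, D] Tₙ₋₁)` and `Tₙ(0) = 0` for
`n ≥ 1`. In Duhamel's formula the factor `n` is absorbed by the integral of `|s|ⁿ⁻¹`, so by
induction `N (Tₙ(t) u) ≤ c e^{ω|t|} (c k |t|)ⁿ N u`.

If `u` vanishes off `K`, then `E u = 0` and `Tₙ(t) u = ηⁿ V(t) u`. A geometric bound with ratio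
`c k |t|` on the powers of `η` forces `V(t) u` to vanish where `η > c k |t|`. Now take
`η = min (dist(·, K), R)`, for which `k = κ`, and let `R → ∞`.
-/

open Filter Set Topology

section StrongProductRule

variable {𝕜 X Y : Type*} [NontriviallyNormedField 𝕜]
  [NormedAddCommGroup X] [NormedSpace 𝕜 X] [NormedAddCommGroup Y] [NormedSpace 𝕜 Y]

theorem isBoundedUnder_norm_of_apply_le {α : Type*} [TopologicalSpace α] {T : α → X →L[𝕜] Y}
    {b : α → ℝ} {a : α} (hb : ContinuousAt b a) (hb_nonneg : ∀ z, 0 ≤ b z)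
    (hT : ∀ z u, ‖T z u‖ ≤ b z * ‖u‖) : (𝓝 a).IsBoundedUnder (· ≤ ·) fun z => ‖T z‖ :=
  hb.isBoundedUnder_le.mono_le <| .of_forall fun z => (T z).opNorm_le_bound (hb_nonneg z) (hT z)

theorem hasDerivAt_clm_apply_of_isBoundedUnder {F : 𝕜 → X →L[𝕜] Y} {g : 𝕜 → X} {g' : X} {w : Y}
    {s : 𝕜} (hF_bdd : (𝓝 s).IsBoundedUnder (· ≤ ·) fun z => ‖F z‖)
    (hF_cont : ContinuousAt (fun z => F z g') s) (hg : HasDerivAt g g' s)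
    (hF_deriv : HasDerivAt (fun z => F z (g s)) w s) :
    HasDerivAt (fun z => F z (g z)) (F s g' + w) s := by
  rw [hasDerivAt_iff_tendsto_slope] at hg hF_deriv ⊢
  -- The operator norm of `F z` only ever meets the vanishing quantity `slope g s z - g'`.
  have slope_eq : slope (fun z => F z (g z)) s =
      fun z => F z (slope g s z - g') + F z g' + slope (fun z => F z (g s)) s z := by
    funext z
    simp only [slope, vsub_eq_sub, map_sub, map_smul, smul_sub]
    abel
  have remainder : Tendsto (fun z => F z (slope g s z - g')) (𝓝[≠] s) (𝓝 0) := by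
    refine Tendsto.op_zero_isBoundedUnder_le (tendsto_sub_nhds_zero_iff.2 hg)
      (hF_bdd.mono nhdsWithin_le_nhds) (fun v T => T v) fun v T => ?_
    rw [mul_comm]
    exact T.le_opNorm v
  rw [slope_eq]
  simpa only [zero_add] using
    (remainder.add (hF_cont.tendsto.mono_left nhdsWithin_le_nhds)).add hF_deriv

end StrongProductRule

section IteratedCommutator

/-- The iterated commutator `[a, [a, …, [a, b]]]` with `n` brackets. -/
def iteratedCommutator {R : Type*} [Ring R] (a b : R) (n : ℕ) : R :=
  (⁅a, ·⁆)^[n] b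

variable {R : Type*} [Ring R] (a b : R)

@[simp]
theorem iteratedCommutator_zero : iteratedCommutator a b 0 = b := rfl

theorem iteratedCommutator_succ (n : ℕ) :
    iteratedCommutator a b (n + 1) = ⁅a, iteratedCommutator a b n⁆ :=
  Function.iterate_succ_apply' ..

theorem iteratedCommutator_one_right_succ (n : ℕ) : iteratedCommutator a 1 (n + 1) = 0 := by
  induction n with
  | zero => simp [iteratedCommutator_succ, Ring.lie_def]
  | succ n ih => rw [iteratedCommutator_succ, ih, Ring.lie_def, mul_zero, zero_mul, sub_zero]

variable {𝕜 X : Type*} [Ring 𝕜] [AddCommGroup X] [TopologicalSpace X] [IsTopologicalAddGroup X]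
  [Module 𝕜 X]

theorem iteratedCommutator_succ_apply (E T : X →L[𝕜] X) (n : ℕ) (u : X) :
    iteratedCommutator E T (n + 1) u =
      E (iteratedCommutator E T n u) - iteratedCommutator E T n (E u) := by
  rw [iteratedCommutator_succ]
  rfl

theorem iteratedCommutator_apply_of_apply_eq_zero {E : X →L[𝕜] X} (T : X →L[𝕜] X) {u : X}
    (hu : E u = 0) (n : ℕ) : iteratedCommutator E T n u = E^[n] (T u) := by
  induction n with
  | zero => rfl
  | succ n ih =>
    rw [iteratedCommutator_succ_apply, ih, hu, map_zero, sub_zero, Function.iterate_succ_apply']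

end IteratedCommutator

section C0Group

variable {X : Type*} [NormedAddCommGroup X] [NormedSpace ℂ X]

/-- `V` is a `C₀` group generated by `iD`, where `D` is an operator with domain `Dom`; the values of
`D` outside `Dom` are junk. -/
structure GeneratesC0Group (Dom : Submodule ℂ X) (D : X → X) (V : ℝ → X →L[ℂ] X) : Prop where
  map_zero : V 0 = 1
  map_add (s t : ℝ) : V (s + t) = (V s).comp (V t)
  continuous_apply (u : X) : Continuous fun t => V t u
  apply_mem (t : ℝ) {u : X} (hu : u ∈ Dom) : V t u ∈ Dom
  hasDerivAt_apply (t : ℝ) {u : X} (hu : u ∈ Dom) :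
    HasDerivAt (fun s => V s u) (I • V t (D u)) t

/-- The commutator `[E, D]` of a bounded operator `E` with an unbounded operator `D`. -/
def opCommutator (E : X →L[ℂ] X) (D : X → X) (u : X) : X :=
  E (D u) - D (E u)

/-- On the domain `Dom` of `D`, which `E` preserves, the commutator `[E, D]` is bounded by `k` with
respect to `N` and commutes with `E`. The last condition is expanded to `E²D - 2EDE + DE² = 0`. -/
def HasBoundedCommutator (Dom : Submodule ℂ X) (D : X → X) (N : X → ℝ) (k : ℝ)
    (E : X →L[ℂ] X) : Prop :=
  ∀ u ∈ Dom, E u ∈ Dom ∧ N (opCommutator E D u) ≤ k * N u ∧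
    E (E (D u)) - (2 : ℂ) • E (D (E u)) + D (E (E u)) = 0

variable {Dom : Submodule ℂ X} {D : X → X} {V : ℝ → X →L[ℂ] X} {E : X →L[ℂ] X} {N : X → ℝ}
  {k : ℝ}

theorem HasBoundedCommutator.apply_mem (hE : HasBoundedCommutator Dom D N k E) :
    ∀ u ∈ Dom, E u ∈ Dom := fun u hu => (hE u hu).1

theorem HasBoundedCommutator.apply_opCommutator (hE : HasBoundedCommutator Dom D N k E) {u : X}
    (hu : u ∈ Dom) : E (opCommutator E D u) = opCommutator E D (E u) := by
  rw [opCommutator, opCommutator, map_sub, ← sub_eq_zero, ← (hE u hu).2.2, two_smul]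
  abel

theorem norm_rescaled_apply_le {c ω : ℝ} (hc : 0 ≤ c)
    (hVb : ∀ t u, ‖V t u‖ ≤ c * Real.exp (ω * |t|) * ‖u‖) {f : ℝ → X} {C : ℝ} {n : ℕ}
    (hf : ∀ s, ‖f s‖ ≤ C * Real.exp (ω * |s|) * |s| ^ n) (t : ℝ) {r : ℝ}
    (hr : r ∈ Icc (0 : ℝ) 1) :
    ‖t • I • V (t - r * t) (f (r * t))‖ ≤
      c * C * Real.exp (ω * |t|) * |t| ^ (n + 1) * r ^ n := by
  have abs_mul_t : |r * t| = r * |t| := by rw [abs_mul, abs_of_nonneg hr.1]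
  have abs_sub : |t - r * t| = |t| - r * |t| := by
    rw [← one_sub_mul, abs_mul, abs_of_nonneg (sub_nonneg.2 hr.2), one_sub_mul]
  have exp_mul : Real.exp (ω * |t|) =
      Real.exp (ω * |t - r * t|) * Real.exp (ω * |r * t|) := by
    rw [← Real.exp_add, abs_sub, abs_mul_t, ← mul_add, sub_add_cancel]
  calc ‖t • I • V (t - r * t) (f (r * t))‖
      = |t| * ‖V (t - r * t) (f (r * t))‖ := by simp [norm_smul]
    _ ≤ |t| * (c * Real.exp (ω * |t - r * t|) *
          (C * Real.exp (ω * |r * t|) * |r * t| ^ n)) := by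
        gcongr
        exact (hVb _ _).trans (by gcongr; exact hf _)
    _ = c * C * Real.exp (ω * |t|) * |t| ^ (n + 1) * r ^ n := by
        rw [exp_mul, abs_mul_t]
        ring

namespace GeneratesC0Group

theorem hasDerivAt_zero (hV : GeneratesC0Group Dom D V) {u : X} (hu : u ∈ Dom) :
    HasDerivAt (fun s => V s u) (I • D u) 0 := by
  simpa [hV.map_zero] using hV.hasDerivAt_apply 0 hu

theorem generator_sub (hV : GeneratesC0Group Dom D V) {u v : X} (hu : u ∈ Dom) (hv : v ∈ Dom) :
    D (u - v) = D u - D v := by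
  have h := (hV.hasDerivAt_zero hu).sub (hV.hasDerivAt_zero hv)
  simp only [Pi.sub_def, ← _root_.map_sub, ← smul_sub] at h
  exact smul_right_injective X I_ne_zero ((hV.hasDerivAt_zero (Dom.sub_mem hu hv)).unique h)

theorem apply_generator (hV : GeneratesC0Group Dom D V) (t : ℝ) {u : X} (hu : u ∈ Dom) :
    V t (D u) = D (V t u) := by
  have h : HasDerivAt (fun s => V (s + t) u) (I • V (0 + t) (D u)) 0 :=
    (hV.hasDerivAt_apply (0 + t) hu).comp_add_const 0 t
  simp only [hV.map_add, zero_add, ContinuousLinearMap.comp_apply] at h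
  exact smul_right_injective X I_ne_zero (h.unique (hV.hasDerivAt_zero (hV.apply_mem t hu)))

theorem opCommutator_sub (hV : GeneratesC0Group Dom D V) (hE : ∀ u ∈ Dom, E u ∈ Dom) {u v : X}
    (hu : u ∈ Dom) (hv : v ∈ Dom) :
    opCommutator E D (u - v) = opCommutator E D u - opCommutator E D v := by
  simp only [opCommutator, map_sub, hV.generator_sub hu hv,
    hV.generator_sub (hE u hu) (hE v hv)]
  abel

theorem iteratedCommutator_apply_mem (hV : GeneratesC0Group Dom D V)
    (hE : ∀ u ∈ Dom, E u ∈ Dom) (n : ℕ) (t : ℝ) {u : X} (hu : u ∈ Dom) :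
    iteratedCommutator E (V t) n u ∈ Dom := by
  induction n generalizing u with
  | zero => exact hV.apply_mem t hu
  | succ n ih =>
    rw [iteratedCommutator_succ_apply]
    exact Dom.sub_mem (hE _ (ih hu)) (ih (hE u hu))

theorem opCommutator_iteratedCommutator_succ (hV : GeneratesC0Group Dom D V)
    (hE : HasBoundedCommutator Dom D N k E) (n : ℕ) (t : ℝ) {u : X} (hu : u ∈ Dom) :
    opCommutator E D (iteratedCommutator E (V t) (n + 1) u) =
      E (opCommutator E D (iteratedCommutator E (V t) n u)) -
        opCommutator E D (iteratedCommutator E (V t) n (E u)) := by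
  have hT_mem := fun {v : X} => hV.iteratedCommutator_apply_mem hE.apply_mem n t (u := v)
  rw [iteratedCommutator_succ_apply,
    hV.opCommutator_sub hE.apply_mem (hE.apply_mem _ (hT_mem hu)) (hT_mem (hE.apply_mem u hu)),
    hE.apply_opCommutator (hT_mem hu)]

-- For `n = 0` the truncated index `n - 1` is harmless, as its coefficient vanishes.
theorem hasDerivAt_iteratedCommutator_apply (hV : GeneratesC0Group Dom D V)
    (hE : HasBoundedCommutator Dom D N k E) (n : ℕ) (t : ℝ) {u : X} (hu : u ∈ Dom) :
    HasDerivAt (fun s => iteratedCommutator E (V s) n u)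
      (I • (D (iteratedCommutator E (V t) n u) +
        (n : ℂ) • opCommutator E D (iteratedCommutator E (V t) (n - 1) u))) t := by
  induction n generalizing u with
  | zero => simpa [hV.apply_generator t hu] using hV.hasDerivAt_apply t hu
  | succ n ih =>
    have hT_mem := fun {v : X} => hV.iteratedCommutator_apply_mem hE.apply_mem n t (u := v)
    have apply_generator_eq : E (D (iteratedCommutator E (V t) n u)) =
        D (E (iteratedCommutator E (V t) n u)) +
          opCommutator E D (iteratedCommutator E (V t) n u) := (add_sub_cancel ..).symm
    have forcing_succ :
        (n : ℂ) • opCommutator E D (iteratedCommutator E (V t) n u) =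
          (n : ℂ) • (E (opCommutator E D (iteratedCommutator E (V t) (n - 1) u)) -
            opCommutator E D (iteratedCommutator E (V t) (n - 1) (E u))) := by
      cases n with
      | zero => simp
      | succ n => rw [hV.opCommutator_iteratedCommutator_succ hE n t hu, Nat.add_sub_cancel]
    have h := ((E.restrictScalars ℝ).hasFDerivAt.comp_hasDerivAt t (ih hu)).fun_sub
      (ih (hE.apply_mem u hu))
    simp only [iteratedCommutator_succ_apply]
    refine h.congr_deriv ?_
    change E (I • (_ + _)) - I • (_ + _) = _
    rw [hV.generator_sub (hE.apply_mem _ (hT_mem hu)) (hT_mem (hE.apply_mem u hu)),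
      Nat.add_sub_cancel, Nat.cast_succ, add_smul, forcing_succ, one_smul, map_smul,
      _root_.map_add, map_smul, ← smul_sub I, smul_sub (n : ℂ), apply_generator_eq]
    congr 1
    abel

-- Duhamel's interpolation between `V t (g 0)` and `g t`.
theorem hasDerivAt_apply_sub (hV : GeneratesC0Group Dom D V)
    (hV_bdd : ∀ s, (𝓝 s).IsBoundedUnder (· ≤ ·) fun z => ‖V z‖) {g : ℝ → X} {f : X} {s : ℝ}
    (hgs : g s ∈ Dom) (hg : HasDerivAt g (I • (D (g s) + f)) s) (t : ℝ) :
    HasDerivAt (fun z => V (t - z) (g z)) (I • V (t - s) f) s := by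
  have h_deriv : HasDerivAt (fun z => V (t - z) (g s)) (-(I • V (t - s) (D (g s)))) s := by
    simpa using (hV.hasDerivAt_apply (t - s) hgs).comp_const_sub t s
  have h_bdd : (𝓝 s).IsBoundedUnder (· ≤ ·) fun z => ‖(V (t - z)).restrictScalars ℝ‖ := by
    obtain ⟨C, hC⟩ := hV_bdd (t - s)
    simp only [ContinuousLinearMap.norm_restrictScalars]
    exact ⟨C, ((continuous_sub_left t).tendsto s).eventually hC⟩
  have h := hasDerivAt_clm_apply_of_isBoundedUnder
    (F := fun z => (V (t - z)).restrictScalars ℝ) h_bdd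
    ((hV.continuous_apply _).comp (continuous_sub_left t)).continuousAt hg h_deriv
  refine h.congr_deriv ?_
  change V (t - s) (I • (D (g s) + f)) + -(I • V (t - s) (D (g s))) = _
  rw [map_smul, _root_.map_add, smul_add, add_neg_eq_iff_eq_add, add_comm]

theorem norm_le_of_forcing_le (hV : GeneratesC0Group Dom D V) {c ω : ℝ} (hc : 0 ≤ c)
    (hVb : ∀ t u, ‖V t u‖ ≤ c * Real.exp (ω * |t|) * ‖u‖) {g f : ℝ → X} (hg_mem : ∀ s, g s ∈ Dom)
    (hg : ∀ s, HasDerivAt g (I • (D (g s) + f s)) s) (hg0 : g 0 = 0) {C : ℝ} {n : ℕ}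
    (hf : ∀ s, ‖f s‖ ≤ C * Real.exp (ω * |s|) * |s| ^ n) (t : ℝ) :
    ‖g t‖ ≤ c * C * Real.exp (ω * |t|) * |t| ^ (n + 1) / (n + 1) := by
  have V_bdd (s : ℝ) : (𝓝 s).IsBoundedUnder (· ≤ ·) fun z => ‖V z‖ :=
    isBoundedUnder_norm_of_apply_le (b := fun z => c * Real.exp (ω * |z|)) (by fun_prop)
      (fun _ => by positivity) hVb
  -- Rescaling `[0, t]` to `[0, 1]` treats both signs of `t` at once.
  have h_deriv (r : ℝ) : HasDerivAt (fun r => V (t - r * t) (g (r * t)))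
      (t • I • V (t - r * t) (f (r * t))) r := by
    have h := hV.hasDerivAt_apply_sub V_bdd (hg_mem (r * t)) (hg (r * t)) t
    exact h.scomp r (hasDerivAt_mul_const t)
  set B := c * C * Real.exp (ω * |t|) * |t| ^ (n + 1)
  have h_majorant (r : ℝ) : HasDerivAt (fun r => B * (r ^ (n + 1) / (n + 1))) (B * r ^ n) r := by
    have h := ((hasDerivAt_pow (n + 1) r).div_const (n + 1 : ℝ)).const_mul B
    refine h.congr_deriv ?_
    rw [Nat.add_sub_cancel, Nat.cast_succ, mul_div_cancel_left₀ _ n.cast_add_one_ne_zero]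
  have h := image_norm_le_of_norm_deriv_right_le_deriv_boundary (a := 0) (b := 1)
    (fun r _ => (h_deriv r).continuousAt.continuousWithinAt)
    (fun r _ => (h_deriv r).hasDerivWithinAt) (by simp [hg0]) h_majorant
    (fun r hr => norm_rescaled_apply_le hc hVb hf t (Ico_subset_Icc_self hr))
    (right_mem_Icc.2 zero_le_one)
  simpa [hV.map_zero, div_eq_mul_inv] using h

theorem norm_iteratedCommutator_apply_le_of_mem (hV : GeneratesC0Group Dom D V) {c ω : ℝ}
    (hc : 0 ≤ c) (hVb : ∀ t u, ‖V t u‖ ≤ c * Real.exp (ω * |t|) * ‖u‖) (hk : 0 ≤ k)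
    (hE : HasBoundedCommutator Dom D norm k E) (n : ℕ) (t : ℝ) {u : X} (hu : u ∈ Dom) :
    ‖iteratedCommutator E (V t) n u‖ ≤ c * Real.exp (ω * |t|) * (c * k * |t|) ^ n * ‖u‖ := by
  induction n generalizing t with
  | zero => simpa using hVb t u
  | succ n ih =>
    have forcing_le (s : ℝ) :
        ‖((n + 1 : ℕ) : ℂ) • opCommutator E D (iteratedCommutator E (V s) n u)‖ ≤
          ((n + 1) * k * c * (c * k) ^ n * ‖u‖) * Real.exp (ω * |s|) * |s| ^ n := by
      have hA := (hE _ (hV.iteratedCommutator_apply_mem hE.apply_mem n s hu)).2.1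
      rw [norm_smul, Complex.norm_natCast, Nat.cast_succ]
      calc (n + 1) * ‖opCommutator E D (iteratedCommutator E (V s) n u)‖
          ≤ (n + 1) * (k * (c * Real.exp (ω * |s|) * (c * k * |s|) ^ n * ‖u‖)) := by
            gcongr
            exact hA.trans (by gcongr; exact ih s)
        _ = _ := by ring
    refine (hV.norm_le_of_forcing_le hc hVb
      (fun s => hV.iteratedCommutator_apply_mem hE.apply_mem (n + 1) s hu)
      (fun s => hV.hasDerivAt_iteratedCommutator_apply hE (n + 1) s hu)
      ?_ forcing_le t).trans_eq ?_
    · rw [hV.map_zero, iteratedCommutator_one_right_succ, zero_apply]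
    · field_simp
      ring

theorem norm_iteratedCommutator_apply_le (hV : GeneratesC0Group Dom D V)
    (hDom : Dense (Dom : Set X)) {c ω : ℝ} (hc : 0 ≤ c)
    (hVb : ∀ t u, ‖V t u‖ ≤ c * Real.exp (ω * |t|) * ‖u‖)
    (hk : 0 ≤ k) (hE : HasBoundedCommutator Dom D norm k E) (n : ℕ) (t : ℝ) (u : X) :
    ‖iteratedCommutator E (V t) n u‖ ≤ c * Real.exp (ω * |t|) * (c * k * |t|) ^ n * ‖u‖ :=
  isClosed_property hDom.denseRange_val
    (isClosed_le (iteratedCommutator E (V t) n).continuous.norm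
      (continuous_const.mul continuous_norm))
    (fun u => hV.norm_iteratedCommutator_apply_le_of_mem hc hVb hk hE n t u.2) u

end GeneratesC0Group

end C0Group

section Renorming

/-- `N` is a norm on `X` equivalent to the given one. -/
structure IsEquivalentNorm (𝕜 : Type*) {X : Type*} [NormedField 𝕜] [NormedAddCommGroup X]
    [NormedSpace 𝕜 X] (N : X → ℝ) : Prop where
  add_le (u v : X) : N (u + v) ≤ N u + N v
  smul (a : 𝕜) (u : X) : N (a • u) = ‖a‖ * N u
  exists_bounds : ∃ c₁ c₂ : ℝ, 0 < c₁ ∧ 0 < c₂ ∧ ∀ u, c₁ * ‖u‖ ≤ N u ∧ N u ≤ c₂ * ‖u‖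

variable {𝕜 X : Type*} [NormedField 𝕜] [NormedAddCommGroup X] [NormedSpace 𝕜 X] {N : X → ℝ}

namespace IsEquivalentNorm

theorem nonneg (hN : IsEquivalentNorm 𝕜 N) (u : X) : 0 ≤ N u := by
  obtain ⟨c₁, _, hc₁, -, h⟩ := hN.exists_bounds
  exact (mul_nonneg hc₁.le (norm_nonneg u)).trans (h u).1

theorem eq_zero_iff (hN : IsEquivalentNorm 𝕜 N) {u : X} : N u = 0 ↔ u = 0 := by
  obtain ⟨c₁, _, hc₁, -, h⟩ := hN.exists_bounds
  refine ⟨fun hu => ?_, fun hu => by simpa [hu] using hN.smul 0 (0 : X)⟩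
  exact norm_le_zero_iff.1 (nonpos_of_mul_nonpos_right (hu ▸ (h u).1) hc₁)

theorem normedSpaceCore (hN : IsEquivalentNorm 𝕜 N) : letI : Norm X := ⟨N⟩; NormedSpace.Core 𝕜 X :=
  letI : Norm X := ⟨N⟩
  { norm_nonneg := hN.nonneg
    norm_smul := hN.smul
    norm_triangle := hN.add_le
    norm_eq_zero_iff := fun _ => hN.eq_zero_iff }

open scoped Uniformity in
theorem uniformity_eq (hN : IsEquivalentNorm 𝕜 N) :
    𝓤 X = @uniformity X (letI : Norm X := ⟨N⟩
      PseudoEMetricSpace.ofSeminormedSpaceCore hN.normedSpaceCore.toCore).toUniformSpace := by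
  obtain ⟨c₁, c₂, hc₁, hc₂, h⟩ := hN.exists_bounds
  let : Norm X := ⟨N⟩
  refine Metric.uniformity_basis_dist.ext (@Metric.uniformity_basis_dist X
    (PseudoMetricSpace.ofSeminormedSpaceCore hN.normedSpaceCore.toCore))
    (fun ε hε => ?_) fun ε hε => ?_
  · refine ⟨c₁ * ε, mul_pos hc₁ hε, fun x (hx : N _ < c₁ * ε) => ?_⟩
    rw [mem_ofPred, dist_eq_norm_neg_add]
    exact lt_of_mul_lt_mul_left ((h _).1.trans_lt hx) hc₁.le
  · refine ⟨ε / c₂, div_pos hε hc₂, fun x hx => (h _).2.trans_lt ?_⟩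
    rw [mem_ofPred, dist_eq_norm_neg_add] at hx
    exact (lt_div_iff₀' hc₂).1 hx

/-- `X` with the norm `N`, keeping the original topology definitionally. -/
noncomputable abbrev normedAddCommGroup (hN : IsEquivalentNorm 𝕜 N) : NormedAddCommGroup X :=
  letI : Norm X := ⟨N⟩
  .ofCoreReplaceUniformity hN.normedSpaceCore hN.uniformity_eq

/-- `X` with the norm `N` and its original scalar multiplication. -/
noncomputable abbrev normedSpace (hN : IsEquivalentNorm 𝕜 N) :
    @NormedSpace 𝕜 X _ hN.normedAddCommGroup.toSeminormedAddCommGroup :=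
  @NormedSpace.mk 𝕜 X _ hN.normedAddCommGroup.toSeminormedAddCommGroup NormedSpace.toModule
    fun a u => (hN.smul a u).le

end IsEquivalentNorm

variable {X : Type*} [NormedAddCommGroup X] [NormedSpace ℂ X] {N : X → ℝ}
  {Dom : Submodule ℂ X} {D : X → X} {V : ℝ → X →L[ℂ] X} {E : X →L[ℂ] X} {k : ℝ}

-- This is the bound for the norm of `X`, applied to `X` renormed by `N`.
theorem GeneratesC0Group.iteratedCommutator_apply_le_of_isEquivalentNorm
    (hV : GeneratesC0Group Dom D V) (hN : IsEquivalentNorm ℂ N) (hDom : Dense (Dom : Set X))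
    {c ω : ℝ} (hc : 0 ≤ c) (hVb : ∀ t u, N (V t u) ≤ c * Real.exp (ω * |t|) * N u)
    (hk : 0 ≤ k) (hE : HasBoundedCommutator Dom D N k E) (n : ℕ) (t : ℝ) (u : X) :
    N (iteratedCommutator E (V t) n u) ≤ c * Real.exp (ω * |t|) * (c * k * |t|) ^ n * N u :=
  @norm_iteratedCommutator_apply_le X hN.normedAddCommGroup hN.normedSpace Dom D V E k
    (@mk X hN.normedAddCommGroup hN.normedSpace Dom D V hV.map_zero hV.map_add hV.continuous_apply
      hV.apply_mem hV.hasDerivAt_apply)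
    hDom c ω hc hVb hk hE n t u

end Renorming

theorem nonpos_of_forall_pow_mul_le {a b x B : ℝ} (ha : 0 ≤ a) (hab : a < b)
    (h : ∀ n : ℕ, b ^ n * x ≤ B * a ^ n) : x ≤ 0 := by
  have hb : 0 < b := ha.trans_lt hab
  have h_tendsto : Tendsto (fun n : ℕ => B * (a / b) ^ n) atTop (𝓝 0) := by
    simpa using (tendsto_pow_atTop_nhds_zero_of_lt_one (div_nonneg ha hb.le)
      ((div_lt_one hb).2 hab)).const_mul B
  refine ge_of_tendsto' h_tendsto fun n => ?_
  rw [div_pow, mul_div_assoc', le_div_iff₀' (pow_pos hb n)]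
  exact h n

section MultiplicationOperator

variable {M F : Type*} [MeasurableSpace M] {μ : Measure M} [NormedAddCommGroup F]
  [NormedSpace ℂ F] {p : ENNReal} [Fact (1 ≤ p)]

/-- `E` is the operator of multiplication by `η` on `Lp F p μ`. -/
def IsMulOperator (η : M → ℝ) (E : Lp F p μ →L[ℂ] Lp F p μ) : Prop :=
  ∀ u, E u =ᵐ[μ] fun x => (η x : ℂ) • u x

theorem exists_isMulOperator {η : M → ℝ} (hη : AEStronglyMeasurable η μ) {C : ℝ}
    (hC : ∀ᵐ x ∂μ, |η x| ≤ C) : ∃ E : Lp F p μ →L[ℂ] Lp F p μ, IsMulOperator η E := by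
  have hη_top : MemLp (fun x => (η x : ℂ)) ⊤ μ := (memLp_top_of_bound hη C hC).ofReal
  refine ⟨(ContinuousLinearMap.lsmul ℂ ℂ).holderL μ ⊤ p p hη_top.toLp, fun u => ?_⟩
  filter_upwards [(ContinuousLinearMap.lsmul ℂ ℂ).coeFn_holder (r := p) hη_top.toLp u,
    hη_top.coeFn_toLp] with x hEu hηx
  rw [ContinuousLinearMap.holderL_apply_apply, hEu, hηx, ContinuousLinearMap.lsmul_apply]

variable {η : M → ℝ} {E : Lp F p μ →L[ℂ] Lp F p μ}

namespace IsMulOperator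

theorem apply_eq_zero (hE : IsMulOperator η E) {u : Lp F p μ} (hu : ∀ᵐ x ∂μ, η x ≠ 0 → u x = 0) :
    E u = 0 := by
  rw [Lp.eq_zero_iff_ae_eq_zero]
  filter_upwards [hE u, hu] with x hEu hux
  rw [hEu, Pi.zero_apply, smul_eq_zero, ofReal_eq_zero]
  tauto

theorem coeFn_iterate (hE : IsMulOperator η E) (n : ℕ) (f : Lp F p μ) :
    E^[n] f =ᵐ[μ] fun x => (η x : ℂ) ^ n • f x := by
  induction n with
  | zero => simp
  | succ n ih =>
    rw [Function.iterate_succ_apply']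
    filter_upwards [hE (E^[n] f), ih] with x hE_iter hx
    rw [hE_iter, hx, smul_smul, pow_succ']

theorem pow_mul_eLpNorm_restrict_le (hE : IsMulOperator η E) (f : Lp F p μ) {b : ℝ} (hb : 0 ≤ b)
    {S : Set M} (hηS : ∀ᵐ x ∂μ.restrict S, b ≤ η x) (n : ℕ) :
    b ^ n * (eLpNorm f p (μ.restrict S)).toReal ≤ ‖E^[n] f‖ := by
  have pointwise : ∀ᵐ x ∂μ.restrict S, ‖((b : ℂ) ^ n • ⇑f) x‖ ≤ ‖(E^[n] f) x‖ := by
    filter_upwards [ae_restrict_of_ae (hE.coeFn_iterate n f), hηS] with x hx hbx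
    rw [hx, Pi.smul_apply, norm_smul, norm_smul, norm_pow, norm_pow, norm_real, norm_real,
      Real.norm_of_nonneg hb, Real.norm_of_nonneg (hb.trans hbx)]
    gcongr
  calc b ^ n * (eLpNorm f p (μ.restrict S)).toReal
      = (eLpNorm ((b : ℂ) ^ n • ⇑f) p (μ.restrict S)).toReal := by
        rw [eLpNorm_const_smul, ENNReal.toReal_mul, toReal_enorm, norm_pow, norm_real,
          Real.norm_of_nonneg hb]
    _ ≤ (eLpNorm (E^[n] f) p μ).toReal :=
        ENNReal.toReal_mono (Lp.eLpNorm_ne_top _)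
          ((eLpNorm_mono_ae pointwise).trans (eLpNorm_restrict_le ..))
    _ = ‖E^[n] f‖ := rfl

theorem ae_eq_zero_of_le_of_norm_iterate_le (hE : IsMulOperator η E) (hη : AEMeasurable η μ)
    {f : Lp F p μ} {a B : ℝ} (ha : 0 ≤ a) (hB : ∀ n, ‖E^[n] f‖ ≤ B * a ^ n) {b : ℝ}
    (hab : a < b) : ∀ᵐ x ∂μ, b ≤ η x → f x = 0 := by
  have hS : NullMeasurableSet {x | b ≤ η x} μ := nullMeasurableSet_le aemeasurable_const hη
  have toReal_nonpos : (eLpNorm f p (μ.restrict {x | b ≤ η x})).toReal ≤ 0 :=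
    nonpos_of_forall_pow_mul_le ha hab fun n =>
      (hE.pow_mul_eLpNorm_restrict_le f (ha.trans hab.le) (ae_restrict_mem₀ hS) n).trans (hB n)
  have eLpNorm_eq_zero : eLpNorm f p (μ.restrict {x | b ≤ η x}) = 0 :=
    ((ENNReal.toReal_eq_zero_iff _).1 (toReal_nonpos.antisymm ENNReal.toReal_nonneg)).resolve_right
      ((Lp.memLp f).restrict _).eLpNorm_ne_top
  rw [eLpNorm_eq_zero_iff (Lp.aestronglyMeasurable f).restrict
    (zero_lt_one.trans_le (Fact.out : 1 ≤ p)).ne'] at eLpNorm_eq_zero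
  exact (ae_restrict_iff'₀ hS).1 eLpNorm_eq_zero

theorem ae_eq_zero_of_norm_iterate_le (hE : IsMulOperator η E) (hη : AEMeasurable η μ)
    {f : Lp F p μ} {a B : ℝ} (ha : 0 ≤ a) (hB : ∀ n, ‖E^[n] f‖ ≤ B * a ^ n) :
    ∀ᵐ x ∂μ, a < η x → f x = 0 := by
  obtain ⟨b, -, hab, hb⟩ := exists_seq_strictAnti_tendsto a
  filter_upwards [ae_all_iff.2 fun n => hE.ae_eq_zero_of_le_of_norm_iterate_le hη ha hB (hab n)]
    with x hx hax
  obtain ⟨n, hn⟩ := (hb.eventually_lt_const hax).exists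
  exact hx n hn.le

end IsMulOperator

variable {N : Lp F p μ → ℝ} {Dom : Submodule ℂ (Lp F p μ)} {D : Lp F p μ → Lp F p μ}
  {V : ℝ → Lp F p μ →L[ℂ] Lp F p μ}

theorem GeneratesC0Group.ae_eq_zero_of_isMulOperator (hV : GeneratesC0Group Dom D V)
    (hN : IsEquivalentNorm ℂ N) (hDom : Dense (Dom : Set (Lp F p μ))) {c ω k : ℝ} (hc : 0 ≤ c)
    (hVb : ∀ t u, N (V t u) ≤ c * Real.exp (ω * |t|) * N u) (hk : 0 ≤ k)
    (hη : AEMeasurable η μ) (hEη : IsMulOperator η E) (hE : HasBoundedCommutator Dom D N k E)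
    {u : Lp F p μ} (hu : ∀ᵐ x ∂μ, η x ≠ 0 → u x = 0) (t : ℝ) :
    ∀ᵐ x ∂μ, c * k * |t| < η x → V t u x = 0 := by
  have hEu : E u = 0 := hEη.apply_eq_zero hu
  obtain ⟨c₁, _, hc₁, -, hN_bounds⟩ := hN.exists_bounds
  refine hEη.ae_eq_zero_of_norm_iterate_le hη (B := c * Real.exp (ω * |t|) * N u / c₁)
    (by positivity) fun n => ?_
  rw [div_mul_eq_mul_div, le_div_iff₀' hc₁, mul_right_comm]
  calc c₁ * ‖E^[n] (V t u)‖ ≤ N (E^[n] (V t u)) := (hN_bounds _).1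
    _ = N (iteratedCommutator E (V t) n u) := by
        rw [iteratedCommutator_apply_of_apply_eq_zero _ hEu]
    _ ≤ c * Real.exp (ω * |t|) * (c * k * |t|) ^ n * N u :=
        hV.iteratedCommutator_apply_le_of_isEquivalentNorm hN hDom hc hVb hk hE n t u

end MultiplicationOperator

theorem finite_propagation_speed_equivalent_norm_general {M F : Type*} [PseudoMetricSpace M]
    [MeasurableSpace M] [OpensMeasurableSpace M] {μ : Measure M} [NormedAddCommGroup F]
    [NormedSpace ℂ F] {p : ENNReal} [Fact (1 ≤ p)] {N : Lp F p μ → ℝ} (hN : IsEquivalentNorm ℂ N)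
    {Dom : Submodule ℂ (Lp F p μ)} (hDom : Dense (Dom : Set (Lp F p μ)))
    {D : Lp F p μ → Lp F p μ} {V : ℝ → Lp F p μ →L[ℂ] Lp F p μ} (hV : GeneratesC0Group Dom D V)
    {c ω : ℝ} (hc : 0 ≤ c) (hVb : ∀ t u, N (V t u) ≤ c * Real.exp (ω * |t|) * N u)
    {κ : ℝ} (hκ : 0 ≤ κ)
    (hcomm : ∀ (η : M → ℝ) (L : NNReal), LipschitzWith L η → (∃ C, ∀ x, |η x| ≤ C) →
      ∀ E : Lp F p μ →L[ℂ] Lp F p μ, IsMulOperator η E → HasBoundedCommutator Dom D N (κ * L) E)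
    {K : Set M} {u : Lp F p μ} (hu : ∀ᵐ x ∂μ, x ∉ K → u x = 0) (t : ℝ) :
    ∀ᵐ x ∂μ, c * κ * |t| < Metric.infDist x K → V t u x = 0 := by
  have vanish_truncated (R : ℕ) :
      ∀ᵐ x ∂μ, c * κ * |t| < min (Metric.infDist x K) R → V t u x = 0 := by
    have h_lip : LipschitzWith 1 fun x => min (Metric.infDist x K) R :=
      (Metric.lipschitz_infDist_pt K).min_const R
    have h_bdd (x : M) : |min (Metric.infDist x K) R| ≤ R := by
      rw [abs_of_nonneg (le_min Metric.infDist_nonneg R.cast_nonneg)]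
      exact min_le_right ..
    have h_meas := h_lip.continuous.measurable
    obtain ⟨E, hE⟩ := exists_isMulOperator (F := F) (p := p) (μ := μ)
      h_meas.aestronglyMeasurable (.of_forall h_bdd)
    have hE_comm : HasBoundedCommutator Dom D N κ E := by
      simpa using hcomm _ 1 h_lip ⟨R, h_bdd⟩ E hE
    refine hV.ae_eq_zero_of_isMulOperator hN hDom hc hVb hκ h_meas.aemeasurable hE hE_comm ?_ t
    filter_upwards [hu] with x hx h_ne
    refine hx fun hxK => h_ne ?_
    rw [Metric.infDist_zero_of_mem hxK, min_eq_left R.cast_nonneg]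
  filter_upwards [ae_all_iff.2 vanish_truncated] with x hx hlt
  obtain ⟨R, hR⟩ := exists_nat_gt (c * κ * |t|)
  exact hx R (lt_min hlt hR)

/-- **Finite propagation speed for first order systems on metric measure spaces,
with respect to an equivalent norm** (McIntosh–Morris, Theorem 2 with Remark on
equivalent norms). -/
theorem finite_propagation_speed_equivalent_norm
    {M : Type*} [MetricSpace M] [MeasurableSpace M] [BorelSpace M]
    (μ : Measure M) [SigmaFinite μ]
    (m : ℕ) (hm : 1 ≤ m) (p : ENNReal) [hp1 : Fact (1 ≤ p)] (hp2 : p ≠ ⊤)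
    (N : Lp (EuclideanSpace ℂ (Fin m)) p μ → ℝ)
    -- `N` is a norm equivalent to the `L^p` norm:
    (hNtri : ∀ u v, N (u + v) ≤ N u + N v)
    (hNsmul : ∀ (a : ℂ) u, N (a • u) = ‖a‖ * N u)
    (hNequiv : ∃ c₁ c₂ : ℝ, 0 < c₁ ∧ 0 < c₂ ∧
      ∀ u, c₁ * ‖u‖ ≤ N u ∧ N u ≤ c₂ * ‖u‖)
    (Dom : Submodule ℂ (Lp (EuclideanSpace ℂ (Fin m)) p μ))
    (hdense : Dense (Dom : Set (Lp (EuclideanSpace ℂ (Fin m)) p μ)))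
    (D : Lp (EuclideanSpace ℂ (Fin m)) p μ → Lp (EuclideanSpace ℂ (Fin m)) p μ)
    (hDadd : ∀ u ∈ Dom, ∀ v ∈ Dom, D (u + v) = D u + D v)
    (hDsmul : ∀ (a : ℂ), ∀ u ∈ Dom, D (a • u) = a • D u)
    (V : ℝ → Lp (EuclideanSpace ℂ (Fin m)) p μ →L[ℂ]
      Lp (EuclideanSpace ℂ (Fin m)) p μ)
    (c ω : ℝ) (hc : 1 ≤ c) (hω : 0 ≤ ω)
    (hV0 : V 0 = ContinuousLinearMap.id ℂ _)
    (hVgrp : ∀ s t : ℝ, V (s + t) = (V s).comp (V t))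
    (hVcont : ∀ u, Continuous fun t => V t u)
    (hVdom : ∀ t : ℝ, ∀ u ∈ Dom, V t u ∈ Dom)
    (hVderiv : ∀ t : ℝ, ∀ u ∈ Dom,
      HasDerivAt (fun s => V s u) (Complex.I • V t (D u)) t)
    (hVD : ∀ t : ℝ, ∀ u ∈ Dom, V t (D u) = D (V t u))
    (hVbound : ∀ (t : ℝ) u, N (V t u) ≤ c * Real.exp (ω * |t|) * N u)
    (κ : ℝ) (hκ : 0 < κ)
    (hcomm : ∀ (η : M → ℝ) (L : NNReal), LipschitzWith L η → (∃ C, ∀ x, |η x| ≤ C) →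
      ∀ Mη : Lp (EuclideanSpace ℂ (Fin m)) p μ →L[ℂ]
          Lp (EuclideanSpace ℂ (Fin m)) p μ,
        (∀ u, (Mη u : M → EuclideanSpace ℂ (Fin m))
            =ᵐ[μ] fun x => (η x : ℂ) • (u : M → EuclideanSpace ℂ (Fin m)) x) →
        ∀ u ∈ Dom, Mη u ∈ Dom ∧
          N (Mη (D u) - D (Mη u)) ≤ κ * L * N u ∧
          Mη (Mη (D u)) - (2 : ℂ) • Mη (D (Mη u)) + D (Mη (Mη u)) = 0)
    (K : Set M) (hK : IsClosed K)
    (u : Lp (EuclideanSpace ℂ (Fin m)) p μ)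
    (hu : ∀ᵐ x ∂μ, x ∉ K → (u : M → EuclideanSpace ℂ (Fin m)) x = 0)
    (t : ℝ) :
    ∀ᵐ x ∂μ, c * κ * |t| < Metric.infDist x K →
      (V t u : M → EuclideanSpace ℂ (Fin m)) x = 0 :=
  finite_propagation_speed_equivalent_norm_general ⟨hNtri, hNsmul, hNequiv⟩ hdense
    ⟨hV0, hVgrp, hVcont, fun t => hVdom t _, fun t => hVderiv t _⟩ (zero_le_one.trans hc) hVbound
    hκ.le hcomm hu t
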